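/- There exist absolute constants 0 < c ≤ C such that for every θ ∈ (0,1) and every positive integer n, c · n^{(3-θ)/2} θ^{-2} (1-θ)^{-1} ≤ ∫_{A} G(s,t,u,v) ds dt du dv ≤ C · n^{(3-θ)/2} θ^{-2} (1-θ)^{-1}, where A = { (s,t,u,v) ∈ (0,∞)⁴ : 0 < u < 1, 0 < v < n^{-1/2}, s ≥ u^{1/2}, t ≥ n^{1/4} }. -/

import Mathlib

open MeasureTheory Set Real

/-- The integrand `G(s,t,u,v)` from the paper's computation of the completely 1-summing
norm of the identity `OH_n → ℓ^n_p`, with `θ = 2/p'`. Here `p = (s, t, u, v)`. -/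
noncomputable def G (θ : ℝ) (n : ℕ) (p : ℝ × ℝ × ℝ × ℝ) : ℝ :=
  (n : ℝ) ^ (2 : ℕ) * p.1 ^ (-1 - 2 * θ) * p.2.1 ^ (-1 - 2 * θ) *
    min (min (min ((n : ℝ)⁻¹ * p.1 ^ (4 : ℝ) * p.2.2.1 ^ (-2 : ℝ) * p.2.2.2 ^ (-2 : ℝ))
                  ((n : ℝ)⁻¹ * p.2.1 ^ (4 : ℝ)))
             (min (p.1 ^ (4 : ℝ) * p.2.2.1 ^ (-2 : ℝ)) (p.2.1 ^ (4 : ℝ) * p.2.2.2 ^ (-2 : ℝ))))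
        (min (min (p.2.2.1 ^ (-2 : ℝ) * p.2.2.2 ^ (-2 : ℝ)) (p.2.2.1 ^ (-2 : ℝ)))
             (min 1 (p.2.2.2 ^ (-2 : ℝ))))

/-- The region of integration. -/
def A (n : ℕ) : Set (ℝ × ℝ × ℝ × ℝ) :=
  {p | 0 < p.1 ∧ 0 < p.2.1 ∧ 0 < p.2.2.1 ∧ 0 < p.2.2.2 ∧ p.2.2.1 < 1 ∧ p.2.2.2 < (n : ℝ) ^ (-(1/2) : ℝ) ∧ p.2.2.1 ^ ((1:ℝ)/2) ≤ p.1 ∧ (n : ℝ) ^ ((1:ℝ)/4) ≤ p.2.1}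

/-!
On `A n` the minimum in `G` is `1`, so `G` is `n² s^(-1-2θ) t^(-1-2θ)` there, while `A n` imposes
separate constraints on `(s, u)`, on `t` and on `v`. The integral is therefore a product. Its
`(s, u)`-factor is computed by integrating in `s` first, which leaves `∫₀¹ u^(-θ) / (2θ) du`; this
is the source of `(1 - θ)⁻¹` and of one of the two factors `θ⁻¹`. The value is exactly
`1/4 · n^((3-θ)/2) θ⁻² (1-θ)⁻¹`, so both constants can be taken to be `1/4`.
-/

section Fubini

variable {α β γ δ : Type*} [MeasurableSpace α] [MeasurableSpace β] [MeasurableSpace γ]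
  [MeasurableSpace δ]

/-- The rearrangement `(s, t, u, v) ↦ ((s, u), (t, v))`, which groups the coordinates that the
region `A n` couples. -/
def prodInterchange : α × β × γ × δ ≃ᵐ (α × γ) × (β × δ) where
  toFun p := ((p.1, p.2.2.1), (p.2.1, p.2.2.2))
  invFun q := (q.1.1, q.2.1, q.1.2, q.2.2)
  measurable_toFun := by simp only [Equiv.coe_fn_mk]; fun_prop
  measurable_invFun := by simp only [Equiv.coe_fn_symm_mk]; fun_prop

theorem measurePreserving_prodInterchange (μa : Measure α) (μb : Measure β) (μc : Measure γ)
    (μd : Measure δ) [SFinite μa] [SFinite μb] [SFinite μc] [SFinite μd] :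
    MeasurePreserving (prodInterchange : α × β × γ × δ ≃ᵐ (α × γ) × (β × δ))
      (μa.prod (μb.prod (μc.prod μd))) ((μa.prod μc).prod (μb.prod μd)) := by
  have left_comm : MeasurePreserving (fun p : β × γ × δ ↦ (p.2.1, p.1, p.2.2))
      (μb.prod (μc.prod μd)) (μc.prod (μb.prod μd)) :=
    (measurePreserving_prodAssoc μc μb μd).comp <|
      (Measure.measurePreserving_swap.prod (.id μd)).comp <|
        (measurePreserving_prodAssoc μb μc μd).symm
  exact (measurePreserving_prodAssoc μa μc (μb.prod μd)).symm.comp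
    ((MeasurePreserving.id μa).prod left_comm)

theorem integral_prod_symm_of_nonneg {μ : Measure α} {ν : Measure β} [SFinite μ] [SFinite ν]
    {f : α × β → ℝ} (hf : AEStronglyMeasurable f (μ.prod ν)) (hf_nonneg : 0 ≤ f)
    (hf_slice : ∀ᵐ y ∂ν, Integrable (fun x ↦ f (x, y)) μ) :
    ∫ z, f z ∂μ.prod ν = ∫ y, ∫ x, f (x, y) ∂μ ∂ν := by
  by_cases h : Integrable f (μ.prod ν)
  · exact integral_prod_symm f h
  · have h_iterated : ¬ Integrable (fun y ↦ ∫ x, f (x, y) ∂μ) ν := fun hy ↦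
      h <| (integrable_prod_iff' hf).2
        ⟨hf_slice, by simpa only [Real.norm_of_nonneg (hf_nonneg _)] using hy⟩
    rw [integral_undef h, integral_undef h_iterated]

end Fubini

section Epigraph

variable {β : Type*}

/-- The part of the epigraph of `φ` that lies over `U`. The height is the first coordinate, to match
the order of the coordinates `(s, u)`. -/
def epigraphOver (U : Set β) (φ : β → ℝ) : Set (ℝ × β) :=
  {q | q.2 ∈ U ∧ φ q.2 ≤ q.1}

variable [MeasurableSpace β] {U : Set β} {φ : β → ℝ}

theorem measurableSet_epigraphOver (hU : MeasurableSet U) (hφ : Measurable φ) :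
    MeasurableSet (epigraphOver U φ) :=
  (measurable_snd hU).inter (measurableSet_le (hφ.comp measurable_snd) measurable_fst)

theorem setIntegral_epigraphOver {μ : Measure ℝ} {ν : Measure β} [SFinite μ] [SFinite ν]
    (hU : MeasurableSet U) (hφ : Measurable φ) {f : ℝ × β → ℝ}
    (hf : AEStronglyMeasurable f (μ.prod ν))
    (hf_nonneg : ∀ q ∈ epigraphOver U φ, 0 ≤ f q)
    (hf_slice : ∀ u ∈ U, IntegrableOn (fun s ↦ f (s, u)) (Ici (φ u)) μ) :
    ∫ q in epigraphOver U φ, f q ∂μ.prod ν = ∫ u in U, ∫ s in Ici (φ u), f (s, u) ∂μ ∂ν := by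
  have hE := measurableSet_epigraphOver hU hφ
  have slice_of_mem : ∀ u ∈ U, (fun s ↦ (epigraphOver U φ).indicator f (s, u)) =
      (Ici (φ u)).indicator fun s ↦ f (s, u) := fun u hu ↦ by
    have slice_eq : (·, u) ⁻¹' epigraphOver U φ = Ici (φ u) := ext fun _ ↦ and_iff_right hu
    rw [← slice_eq]
    exact funext fun _ ↦ (indicator_comp_right (·, u)).symm
  have slice_of_notMem : ∀ u ∉ U, (fun s ↦ (epigraphOver U φ).indicator f (s, u)) = 0 :=
    fun u hu ↦ by ext s; exact indicator_of_notMem (fun h ↦ hu h.1) f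
  rw [← integral_indicator hE, ← integral_indicator hU,
    integral_prod_symm_of_nonneg (hf.indicator hE) (indicator_nonneg hf_nonneg)]
  · refine integral_congr_ae (.of_forall fun u ↦ ?_)
    by_cases hu : u ∈ U
    · simp only [slice_of_mem u hu, integral_indicator measurableSet_Ici, indicator_of_mem hu]
    · simp only [slice_of_notMem u hu, indicator_of_notMem hu, integral_zero']
  · refine .of_forall fun u ↦ ?_
    by_cases hu : u ∈ U
    · rw [slice_of_mem u hu]
      exact (hf_slice u hu).integrable_indicator measurableSet_Ici
    · rw [slice_of_notMem u hu]
      exact integrable_zero _ _ _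

end Epigraph

theorem integral_Ici_rpow_of_lt {a c : ℝ} (ha : a < -1) (hc : 0 < c) :
    ∫ s in Ici c, s ^ a = -c ^ (a + 1) / (a + 1) := by
  rw [integral_Ici_eq_integral_Ioi, integral_Ioi_rpow_of_lt ha hc]

theorem integral_Ioo_zero_rpow {a b : ℝ} (ha : -1 < a) (hb : 0 ≤ b) :
    ∫ u in Ioo 0 b, u ^ a = b ^ (a + 1) / (a + 1) := by
  rw [← integral_Ioc_eq_integral_Ioo, ← intervalIntegral.integral_of_le hb,
    integral_rpow (.inl ha), zero_rpow (by linarith), sub_zero]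

theorem setIntegral_epigraphOver_rpow {a b r : ℝ} (ha : a < -1) (hr : -1 < r * (a + 1))
    (hb : 0 ≤ b) :
    ∫ q in epigraphOver (Ioo 0 b) (· ^ r), q.1 ^ a =
      -b ^ (r * (a + 1) + 1) / ((r * (a + 1) + 1) * (a + 1)) := by
  have inner : ∀ u ∈ Ioo 0 b, ∫ s in Ici (u ^ r), s ^ a = u ^ (r * (a + 1)) * -(a + 1)⁻¹ :=
    fun u hu ↦ by
      rw [integral_Ici_rpow_of_lt ha (rpow_pos_of_pos hu.1 r), ← rpow_mul hu.1.le]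
      ring
  have measurable_integrand : Measurable fun q : ℝ × ℝ ↦ q.1 ^ a := by fun_prop
  rw [Measure.volume_eq_prod, setIntegral_epigraphOver measurableSet_Ioo (by fun_prop)
    measurable_integrand.aestronglyMeasurable,
    setIntegral_congr_fun measurableSet_Ioo inner, integral_mul_const, integral_Ioo_zero_rpow hr hb]
  · rw [div_mul_eq_div_div]
    ring
  · rintro q ⟨hu, hs⟩
    exact rpow_nonneg ((rpow_nonneg hu.1.le r).trans hs) a
  · exact fun u hu ↦ integrableOn_Ici_iff_integrableOn_Ioi (by finiteness) |>.2
      (integrableOn_Ioi_rpow_of_lt ha (rpow_pos_of_pos hu.1 r))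

theorem pos_of_rpow_pos {x r : ℝ} (hx : 0 ≤ x) (hr : r ≠ 0) (h : 0 < x ^ r) : 0 < x :=
  hx.lt_of_ne' fun hx0 ↦ by simp [hx0, zero_rpow hr] at h

-- For `n = 0` both sides are empty, because `0 ^ (-(1 / 2) : ℝ)` has the junk value `0`.
theorem A_eq_preimage_prodInterchange (n : ℕ) :
    A n = prodInterchange ⁻¹' (epigraphOver (Ioo (0 : ℝ) 1) (· ^ ((1 : ℝ) / 2)) ×ˢ
      (Ici ((n : ℝ) ^ ((1 : ℝ) / 4)) ×ˢ Ioo 0 ((n : ℝ) ^ (-(1 / 2) : ℝ)))) := by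
  ext ⟨s, t, u, v⟩
  constructor
  · rintro ⟨-, -, hu, hv, hu1, hvn, hus, hnt⟩
    exact ⟨⟨⟨hu, hu1⟩, hus⟩, hnt, hv, hvn⟩
  · rintro ⟨⟨⟨hu, hu1⟩, hus⟩, hnt, hv, hvn⟩
    have hn0 : (0 : ℝ) < n := pos_of_rpow_pos n.cast_nonneg (by norm_num) (hv.trans hvn)
    exact ⟨(rpow_pos_of_pos hu _).trans_le hus, (rpow_pos_of_pos hn0 _).trans_le hnt,
      hu, hv, hu1, hvn, hus, hnt⟩

theorem measurableSet_A (n : ℕ) : MeasurableSet (A n) := by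
  rw [A_eq_preimage_prodInterchange]
  exact prodInterchange.measurable <|
    (measurableSet_epigraphOver measurableSet_Ioo (by fun_prop)).prod
      (measurableSet_Ici.prod measurableSet_Ioo)

theorem G_eq_of_mem_A (θ : ℝ) {n : ℕ} {p : ℝ × ℝ × ℝ × ℝ} (hp : p ∈ A n) :
    G θ n p = (n : ℝ) ^ 2 * p.1 ^ (-1 - 2 * θ) * p.2.1 ^ (-1 - 2 * θ) := by
  obtain ⟨s, t, u, v⟩ := p
  obtain ⟨hs, ht, hu, hv, hu1, hvn, hus, hnt⟩ := hp
  dsimp only at hs ht hu hv hu1 hvn hus hnt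
  have hn0 : (0 : ℝ) < n := pos_of_rpow_pos n.cast_nonneg (by norm_num) (hv.trans hvn)
  have hn1 : (1 : ℝ) ≤ n := Nat.one_le_cast.2 (Nat.cast_pos.1 hn0)
  have n_le_t : (n : ℝ) ≤ t ^ (4 : ℝ) :=
    (rpow_inv_le_iff_of_pos hn0.le ht.le (by norm_num)).1 (by rwa [← one_div])
  have n_le_v : (n : ℝ) ≤ v ^ (-2 : ℝ) :=
    ((lt_rpow_inv_iff_of_neg hv hn0 (by norm_num)).1 (by convert hvn using 2; norm_num)).le
  have u_le_s : u ^ (2 : ℝ) ≤ s ^ (4 : ℝ) := by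
    calc u ^ (2 : ℝ) = (u ^ ((1 : ℝ) / 2)) ^ (4 : ℝ) := by rw [← rpow_mul hu.le]; norm_num
      _ ≤ s ^ (4 : ℝ) := rpow_le_rpow (by positivity) hus (by norm_num)
  have one_le_u : 1 ≤ u ^ (-2 : ℝ) := one_le_rpow_of_pos_of_le_one_of_nonpos hu hu1.le (by norm_num)
  have one_le_su : 1 ≤ s ^ (4 : ℝ) * u ^ (-2 : ℝ) := by
    rwa [rpow_neg hu.le, ← div_eq_mul_inv, one_le_div (by positivity)]
  have one_le_nt : 1 ≤ (n : ℝ)⁻¹ * t ^ (4 : ℝ) := by rwa [← div_eq_inv_mul, one_le_div hn0]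
  have one_le_nv : 1 ≤ (n : ℝ)⁻¹ * v ^ (-2 : ℝ) := by rwa [← div_eq_inv_mul, one_le_div hn0]
  have one_le_v : 1 ≤ v ^ (-2 : ℝ) := hn1.trans n_le_v
  have one_le_tv : 1 ≤ t ^ (4 : ℝ) * v ^ (-2 : ℝ) :=
    one_le_mul_of_one_le_of_one_le (hn1.trans n_le_t) one_le_v
  have one_le_uv : 1 ≤ u ^ (-2 : ℝ) * v ^ (-2 : ℝ) :=
    one_le_mul_of_one_le_of_one_le one_le_u one_le_v
  have one_le_nsuv : 1 ≤ (n : ℝ)⁻¹ * s ^ (4 : ℝ) * u ^ (-2 : ℝ) * v ^ (-2 : ℝ) :=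
    (one_le_mul_of_one_le_of_one_le one_le_su one_le_nv).trans_eq (by ring)
  rw [G, min_eq_left one_le_v, min_eq_right (le_min one_le_uv one_le_u),
    min_eq_right (le_min (le_min one_le_nsuv one_le_nt) (le_min one_le_su one_le_tv)), mul_one]

theorem setIntegral_A_G_eq_mul (θ : ℝ) (n : ℕ) :
    ∫ p in A n, G θ n p = (n : ℝ) ^ 2 *
      ((∫ q in epigraphOver (Ioo (0 : ℝ) 1) (· ^ ((1 : ℝ) / 2)), q.1 ^ (-1 - 2 * θ)) *
        ((∫ t in Ici ((n : ℝ) ^ ((1 : ℝ) / 4)), t ^ (-1 - 2 * θ)) * (n : ℝ) ^ (-(1 / 2) : ℝ))) := by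
  set S := epigraphOver (Ioo (0 : ℝ) 1) (· ^ ((1 : ℝ) / 2))
  set T := Ici ((n : ℝ) ^ ((1 : ℝ) / 4))
  set V := Ioo 0 ((n : ℝ) ^ (-(1 / 2) : ℝ))
  have volume_V : ∫ _ in V, (1 : ℝ) = (n : ℝ) ^ (-(1 / 2) : ℝ) := by
    simp [V, rpow_nonneg n.cast_nonneg]
  calc ∫ p in A n, G θ n p
      = ∫ p in A n, (n : ℝ) ^ 2 * (p.1 ^ (-1 - 2 * θ) * (p.2.1 ^ (-1 - 2 * θ) * 1)) :=
        setIntegral_congr_fun (measurableSet_A n) fun p hp ↦ by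
          rw [G_eq_of_mem_A θ hp, mul_one, mul_assoc]
    _ = (n : ℝ) ^ 2 * ∫ p in A n, p.1 ^ (-1 - 2 * θ) * (p.2.1 ^ (-1 - 2 * θ) * 1) :=
        integral_const_mul _ _
    _ = (n : ℝ) ^ 2 * ∫ q in S ×ˢ (T ×ˢ V),
          q.1.1 ^ (-1 - 2 * θ) * (q.2.1 ^ (-1 - 2 * θ) * 1) := by
        rw [A_eq_preimage_prodInterchange]
        exact congrArg _ <| (measurePreserving_prodInterchange _ _ _ _).setIntegral_preimage_emb
          prodInterchange.measurableEmbedding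
          (fun q ↦ q.1.1 ^ (-1 - 2 * θ) * (q.2.1 ^ (-1 - 2 * θ) * 1)) _
    _ = _ := by
        rw [← volume_V, ← setIntegral_prod_mul, ← Measure.volume_eq_prod, ← setIntegral_prod_mul]
        rfl

theorem setIntegral_A_G {θ : ℝ} (hθ0 : 0 < θ) (hθ1 : θ < 1) {n : ℕ} (hn : 0 < n) :
    ∫ p in A n, G θ n p =
      1 / 4 * ((n : ℝ) ^ ((3 - θ) / 2) * θ ^ (-2 : ℝ) * (1 - θ) ^ (-1 : ℝ)) := by
  have hn0 : (0 : ℝ) < n := Nat.cast_pos.2 hn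
  have hθ1' : 1 - θ ≠ 0 := (sub_pos.2 hθ1).ne'
  have su_integral : ∫ q in epigraphOver (Ioo (0 : ℝ) 1) (· ^ ((1 : ℝ) / 2)),
      q.1 ^ (-1 - 2 * θ) = 1 / (2 * θ * (1 - θ)) := by
    rw [setIntegral_epigraphOver_rpow (by linarith) (by linarith) zero_le_one, one_rpow,
      show 1 / 2 * (-1 - 2 * θ + 1) + 1 = 1 - θ by ring, show -1 - 2 * θ + 1 = -(2 * θ) by ring]
    field_simp
  have t_integral : ∫ t in Ici ((n : ℝ) ^ ((1 : ℝ) / 4)), t ^ (-1 - 2 * θ) =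
      (n : ℝ) ^ (-θ / 2) / (2 * θ) := by
    rw [integral_Ici_rpow_of_lt (by linarith) (by positivity), ← rpow_mul hn0.le,
      show -1 - 2 * θ + 1 = -(2 * θ) by ring, neg_div_neg_eq,
      show 1 / 4 * -(2 * θ) = -θ / 2 by ring]
  have n_powers : (n : ℝ) ^ ((3 - θ) / 2) =
      (n : ℝ) ^ 2 * (n : ℝ) ^ (-θ / 2) * (n : ℝ) ^ (-(1 / 2) : ℝ) := by
    rw [← rpow_two, ← rpow_add hn0, ← rpow_add hn0]
    ring_nf
  rw [setIntegral_A_G_eq_mul, su_integral, t_integral, n_powers, rpow_neg_one,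
    rpow_neg hθ0.le, rpow_two]
  field_simp
  norm_num

theorem stmt_4 :
    ∃ c C : ℝ, 0 < c ∧ c ≤ C ∧ ∀ θ : ℝ, 0 < θ → θ < 1 → ∀ n : ℕ, 0 < n →
      c * ((n : ℝ) ^ ((3 - θ) / 2) * θ ^ (-2 : ℝ) * (1 - θ) ^ (-1 : ℝ)) ≤ (∫ p in A n, G θ n p) ∧
      (∫ p in A n, G θ n p) ≤ C * ((n : ℝ) ^ ((3 - θ) / 2) * θ ^ (-2 : ℝ) * (1 - θ) ^ (-1 : ℝ)) := by
  refine ⟨1 / 4, 1 / 4, by norm_num, le_rfl, fun θ hθ0 hθ1 n hn ↦ ?_⟩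
  have h := setIntegral_A_G hθ0 hθ1 hn
  exact ⟨h.ge, h.le⟩
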